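/- Fix π ∈ (0,1/2), m > 0, δ > 0, and let ρ* = ρ*(π,m,δ) be the unique ρ ∈ (0,1) satisfying π·δ·g(ρ/(2πmδ)) + (1−π)·δ·g(ρ/(2(1−π)mδ)) = 1 − ρ². Set N := g₁⁻¹(ρ*/(2πmδ)) + ρ*·m and D := g₁⁻¹(ρ*/(2(1−π)mδ)) + ρ*·m, and for τ > 0 define β₀(τ) := (τ·D − N)/(1 + τ) and Err_b(τ) := ½·(Φ(−ρ*·m − β₀(τ)) + Φ(−ρ*·m + β₀(τ))). Assume N > 0 and D > 0. Then τ^opt := N/D > 0 satisfies β₀(τ^opt) = 0 and Err_b(τ^opt) = Φ(−ρ*·m), and Err_b(τ) > Φ(−ρ*·m) for every τ > 0 with τ ≠ τ^opt; i.e., τ^opt is the unique minimizer of the asymptotic balanced error over τ ∈ (0,∞). -/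

import Mathlib

open MeasureTheory

/-- The standard normal density. -/
noncomputable def normPDF (x : ℝ) : ℝ := Real.exp (-x ^ 2 / 2) / Real.sqrt (2 * Real.pi)

/-- The standard normal cumulative distribution function. -/
noncomputable def normCDF (x : ℝ) : ℝ := ∫ t in Set.Iic x, normPDF t

/-- `g₁(x) = x·Φ(x) + φ(x)`, equal to `E[(Z+x)₊]` for standard normal `Z`. -/
noncomputable def g1 (x : ℝ) : ℝ := x * normCDF x + normPDF x

/-- `g₂(x) = (x²+1)·Φ(x) + x·φ(x)`, equal to `E[(Z+x)₊²]` for standard normal `Z`. -/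
noncomputable def g2 (x : ℝ) : ℝ := (x ^ 2 + 1) * normCDF x + x * normPDF x

/-- The inverse of `g₁` (on its range `(0,∞)`). -/
noncomputable def g1inv : ℝ → ℝ := Function.invFun g1

/-- `g = g₂ ∘ g₁⁻¹`. -/
noncomputable def gfn (t : ℝ) : ℝ := g2 (g1inv t)

lemma normPDF_continuous : Continuous normPDF := by
  unfold normPDF
  fun_prop

lemma normPDF_integrable : Integrable normPDF := by
  have h := (integrable_exp_neg_mul_sq (b := 1 / 2) (by norm_num)).div_const
    (Real.sqrt (2 * Real.pi))
  refine h.congr (Filter.Eventually.of_forall fun x => ?_)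
  show _ = normPDF x
  unfold normPDF
  ring_nf

lemma normCDF_hasDerivAt (x : ℝ) : HasDerivAt normCDF (normPDF x) x := by
  have h1 : normCDF = fun y => normCDF 0 + ∫ t in (0 : ℝ)..y, normPDF t := by
    funext y
    have := intervalIntegral.integral_Iic_sub_Iic (μ := volume) (f := normPDF) (a := 0) (b := y)
      normPDF_integrable.integrableOn normPDF_integrable.integrableOn
    rw [← this]
    unfold normCDF
    ring
  rw [h1]
  exact (normPDF_continuous.integral_hasStrictDerivAt 0 x).hasDerivAt.const_add _

lemma normPDF_lt {x y : ℝ} (h : y ^ 2 < x ^ 2) : normPDF x < normPDF y := by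
  unfold normPDF
  have : 0 < Real.sqrt (2 * Real.pi) := Real.sqrt_pos.2 (by positivity)
  apply div_lt_div_of_pos_right _ this
  apply Real.exp_lt_exp.2
  linarith

lemma normCDF_sym_pos {a b : ℝ} (ha : 0 < a) (hb : 0 < b) :
    2 * normCDF (-a) < normCDF (-a - b) + normCDF (-a + b) := by
  have hd : ∀ s : ℝ, HasDerivAt (fun s => normCDF (-a - s) + normCDF (-a + s))
      (normPDF (-a - s) * (-1) + normPDF (-a + s) * 1) s := by
    intro s
    exact ((normCDF_hasDerivAt (-a - s)).comp s ((hasDerivAt_id s).const_sub (-a))).add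
      ((normCDF_hasDerivAt (-a + s)).comp s ((hasDerivAt_id s).const_add (-a)))
  have hmono : StrictMonoOn (fun s => normCDF (-a - s) + normCDF (-a + s)) (Set.Ici 0) := by
    apply strictMonoOn_of_deriv_pos (convex_Ici 0)
    · exact fun s _ => (hd s).continuousAt.continuousWithinAt
    · intro s hs
      rw [interior_Ici] at hs
      have hs' : 0 < s := hs
      rw [(hd s).deriv]
      have := normPDF_lt (x := -a - s) (y := -a + s) (by nlinarith [mul_pos ha hs'])
      linarith
  have := hmono (Set.mem_Ici.2 le_rfl) (Set.mem_Ici.2 hb.le) hb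
  simp only [sub_zero, add_zero] at this
  linarith

lemma normCDF_sym {a b : ℝ} (ha : 0 < a) (hb : b ≠ 0) :
    2 * normCDF (-a) < normCDF (-a - b) + normCDF (-a + b) := by
  rcases lt_or_gt_of_ne hb with h | h
  · have := normCDF_sym_pos ha (neg_pos.2 h)
    rw [sub_neg_eq_add, ← sub_eq_add_neg] at this
    linarith
  · exact normCDF_sym_pos ha h

/-- The optimal rebalancing parameter `τ^opt = N/D` zeroes the
limiting intercept and uniquely minimizes the asymptotic balanced error over
`τ ∈ (0,∞)`, where the minimum value is `Φ(−ρ*·m)`. -/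
theorem stmt_16 (p m δ ρ : ℝ)
    (hp : p ∈ Set.Ioo (0 : ℝ) (1 / 2)) (hm : 0 < m) (hδ : 0 < δ)
    (hρ : ρ ∈ Set.Ioo (0 : ℝ) 1)
    (heq : p * δ * gfn (ρ / (2 * p * m * δ)) +
        (1 - p) * δ * gfn (ρ / (2 * (1 - p) * m * δ)) = 1 - ρ ^ 2)
    (N D : ℝ)
    (hN : N = g1inv (ρ / (2 * p * m * δ)) + ρ * m)
    (hD : D = g1inv (ρ / (2 * (1 - p) * m * δ)) + ρ * m)
    (hNpos : 0 < N) (hDpos : 0 < D)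
    (β₀ Errb : ℝ → ℝ)
    (hβ₀ : ∀ τ, β₀ τ = (τ * D - N) / (1 + τ))
    (hErrb : ∀ τ, Errb τ =
      (1 / 2) * (normCDF (-(ρ * m) - β₀ τ) + normCDF (-(ρ * m) + β₀ τ))) :
    0 < N / D ∧
    β₀ (N / D) = 0 ∧
    Errb (N / D) = normCDF (-(ρ * m)) ∧
    ∀ τ : ℝ, 0 < τ → τ ≠ N / D → normCDF (-(ρ * m)) < Errb τ := by
  have hz : β₀ (N / D) = 0 := by
    rw [hβ₀, div_mul_cancel₀ _ hDpos.ne', sub_self, zero_div]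
  refine ⟨div_pos hNpos hDpos, hz, ?_, ?_⟩
  · rw [hErrb, hz, sub_zero, add_zero]
    ring
  · intro τ hτ hne
    have hb : β₀ τ ≠ 0 := by
      rw [hβ₀]
      apply div_ne_zero
      · intro h
        exact hne ((eq_div_iff hDpos.ne').2 (by linarith))
      · linarith
    have := normCDF_sym (mul_pos hρ.1 hm) hb
    rw [hErrb]
    linarith
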